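/- Let α ∈ ℝ_{>0}^K and let π be a Dirichlet(α)-distributed random vector. Then for every k ∈ {1,…,K}, 𝔼[log π_k] = ψ(α_k) − ψ(α₀), where α₀ = Σ_{j=1}^K α_j and ψ denotes the digamma function. -/

import Mathlib

/-!
Multiplying the Gamma(a, r) density by `x ^ u * exp (t * x)` gives, up to a constant, the
Gamma(a + u, r - t) density. For `u = 0` this computes the moment generating function of the Gamma
law, so `S = ∑ j, G j` is Gamma(α₀, 1)-distributed by independence. For `t = 0` it computes the
moment generating function of `log G`, whose derivative at `0` is `𝔼[log G] = ψ(a) - log r`.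
It remains to take expectations in `log π_k = log G_k - log S`.
-/

open MeasureTheory ProbabilityTheory

/-- The digamma function `ψ(t) = Γ'(t)/Γ(t)`, the logarithmic derivative of the
real Gamma function. -/
noncomputable def digamma (t : ℝ) : ℝ := deriv Real.Gamma t / Real.Gamma t

lemma measure_ext_of_mgf_id_eq {μ ν : Measure ℝ} [IsProbabilityMeasure μ] [IsFiniteMeasure ν]
    (hμ : 0 ∈ interior (integrableExpSet id μ)) (hmgf : mgf id μ = mgf id ν) : μ = ν := by
  refine Measure.ext_of_charFun (funext fun t ↦ ?_)
  rw [← complexMGF_id_mul_I, ← complexMGF_id_mul_I]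
  exact eqOn_complexMGF_of_mgf hmgf (by simpa using hμ)

section GammaMeasure

variable {a b r s t u : ℝ}

lemma measurable_gammaPDF (a r : ℝ) : Measurable (gammaPDF a r) :=
  (measurable_gammaPDFReal a r).ennreal_ofReal

lemma ae_pos_gammaMeasure (a r : ℝ) : ∀ᵐ x ∂gammaMeasure a r, 0 < x := by
  rw [gammaMeasure, ae_withDensity_iff (measurable_gammaPDF a r)]
  filter_upwards [volume.ae_ne 0] with x hx_ne hpdf
  by_contra! hx
  exact hpdf (gammaPDF_of_neg (hx.lt_of_ne hx_ne))

lemma gammaMeasure_eq_withDensity_restrict_Ioi (a r : ℝ) :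
    gammaMeasure a r = (volume.restrict (Set.Ioi 0)).withDensity (gammaPDF a r) := by
  rw [← restrict_withDensity measurableSet_Ioi]
  exact (Measure.restrict_eq_self_of_ae_mem (ae_pos_gammaMeasure a r)).symm

lemma integral_gammaMeasure (ha : 0 < a) (hr : 0 < r) (f : ℝ → ℝ) :
    ∫ x, f x ∂gammaMeasure a r = ∫ x in Set.Ioi 0, gammaPDFReal a r x * f x := by
  rw [gammaMeasure_eq_withDensity_restrict_Ioi, integral_withDensity_eq_integral_toReal_smul
    (measurable_gammaPDF a r) (ae_of_all _ fun _ ↦ ENNReal.ofReal_lt_top)]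
  simp only [gammaPDF, ENNReal.toReal_ofReal (gammaPDFReal_nonneg ha hr _), smul_eq_mul]

lemma integrable_gammaMeasure_iff (ha : 0 < a) (hr : 0 < r) {f : ℝ → ℝ} :
    Integrable f (gammaMeasure a r) ↔
      IntegrableOn (fun x ↦ gammaPDFReal a r x * f x) (Set.Ioi 0) := by
  rw [gammaMeasure_eq_withDensity_restrict_Ioi, integrable_withDensity_iff_integrable_smul'
    (measurable_gammaPDF a r) (ae_of_all _ fun _ ↦ ENNReal.ofReal_lt_top)]
  simp only [gammaPDF, ENNReal.toReal_ofReal (gammaPDFReal_nonneg ha hr _), smul_eq_mul,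
    IntegrableOn]

lemma eqOn_gammaPDFReal_mul_rpow_mul_exp (hau : 0 < a + u) (hrt : t < r) :
    Set.EqOn (fun x ↦ gammaPDFReal a r x * (x ^ u * Real.exp (t * x)))
      (fun x ↦ gammaPDFReal (a + u) (r - t) x *
        (r ^ a * Real.Gamma (a + u) / (Real.Gamma a * (r - t) ^ (a + u)))) (Set.Ioi 0) := by
  intro x (hx : 0 < x)
  have hΓ : Real.Gamma (a + u) ≠ 0 := (Real.Gamma_pos_of_pos hau).ne'
  have hrt_pow : (r - t) ^ (a + u) ≠ 0 := (Real.rpow_pos_of_pos (sub_pos.2 hrt) _).ne'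
  have hx_pow : x ^ (a + u - 1) = x ^ (a - 1) * x ^ u := by rw [← Real.rpow_add hx]; ring_nf
  have hexp : Real.exp (-((r - t) * x)) = Real.exp (-(r * x)) * Real.exp (t * x) := by
    rw [← Real.exp_add]; ring_nf
  simp only [gammaPDFReal, if_pos hx.le, hx_pow, hexp]
  field_simp

lemma integrable_rpow_mul_exp_gammaMeasure (ha : 0 < a) (hr : 0 < r) (hau : 0 < a + u)
    (hrt : t < r) : Integrable (fun x ↦ x ^ u * Real.exp (t * x)) (gammaMeasure a r) := by
  have hrt' : 0 < r - t := sub_pos.2 hrt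
  have := isProbabilityMeasure_gammaMeasure hau hrt'
  rw [integrable_gammaMeasure_iff ha hr,
    integrableOn_congr_fun (eqOn_gammaPDFReal_mul_rpow_mul_exp hau hrt) measurableSet_Ioi,
    ← integrable_gammaMeasure_iff hau hrt']
  exact integrable_const _

lemma integral_rpow_mul_exp_gammaMeasure (ha : 0 < a) (hr : 0 < r) (hau : 0 < a + u)
    (hrt : t < r) :
    ∫ x, x ^ u * Real.exp (t * x) ∂gammaMeasure a r =
      r ^ a * Real.Gamma (a + u) / (Real.Gamma a * (r - t) ^ (a + u)) := by
  have hrt' : 0 < r - t := sub_pos.2 hrt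
  have := isProbabilityMeasure_gammaMeasure hau hrt'
  rw [integral_gammaMeasure ha hr,
    setIntegral_congr_fun measurableSet_Ioi (eqOn_gammaPDFReal_mul_rpow_mul_exp hau hrt),
    ← integral_gammaMeasure hau hrt', integral_const, probReal_univ, one_smul]

lemma not_integrable_exp_rate_mul_gammaMeasure (ha : 0 < a) (hr : 0 < r) :
    ¬ Integrable (fun x ↦ Real.exp (r * x)) (gammaMeasure a r) := by
  have hc : r ^ a / Real.Gamma a ≠ 0 :=
    (div_pos (Real.rpow_pos_of_pos hr a) (Real.Gamma_pos_of_pos ha)).ne'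
  have tilted_eq : Set.EqOn (fun x ↦ gammaPDFReal a r x * Real.exp (r * x))
      (fun x ↦ r ^ a / Real.Gamma a * x ^ (a - 1)) (Set.Ioi 0) := fun x (hx : 0 < x) ↦ by
    simp only [gammaPDFReal, if_pos hx.le, mul_assoc, ← Real.exp_add, neg_add_cancel,
      Real.exp_zero, mul_one]
  rw [integrable_gammaMeasure_iff ha hr, integrableOn_congr_fun tilted_eq measurableSet_Ioi,
    IntegrableOn, integrable_const_mul_iff hc.isUnit]
  exact not_integrableOn_Ioi_rpow (a - 1)

lemma integrableExpSet_id_gammaMeasure (ha : 0 < a) (hr : 0 < r) :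
    integrableExpSet id (gammaMeasure a r) = Set.Iio r := by
  have := isProbabilityMeasure_gammaMeasure ha hr
  ext t
  refine ⟨fun ht ↦ ?_, fun ht ↦ ?_⟩
  · by_contra hrt
    exact not_integrable_exp_rate_mul_gammaMeasure ha hr
      (integrable_exp_mul_of_nonneg_of_le ht hr.le (not_lt.1 hrt))
  · have h := integrable_rpow_mul_exp_gammaMeasure (u := 0) ha hr (by simpa using ha) ht
    simpa [integrableExpSet] using h

lemma mgf_id_gammaMeasure (ha : 0 < a) (hr : 0 < r) (ht : t < r) :
    mgf id (gammaMeasure a r) t = (r / (r - t)) ^ a := by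
  have hΓ : Real.Gamma a ≠ 0 := (Real.Gamma_pos_of_pos ha).ne'
  have h := integral_rpow_mul_exp_gammaMeasure (u := 0) ha hr (by simpa using ha) ht
  simp only [Real.rpow_zero, one_mul, add_zero] at h
  simp only [mgf, id_eq, h, Real.div_rpow hr.le (sub_pos.2 ht).le]
  field_simp

lemma mgf_id_gammaMeasure_of_le (ha : 0 < a) (hr : 0 < r) (ht : r ≤ t) :
    mgf id (gammaMeasure a r) t = 0 :=
  mgf_undef fun h ↦ ht.not_gt <| (integrableExpSet_id_gammaMeasure ha hr).le h

lemma hasLaw_sum_gammaMeasure {ι Ω : Type*} [Fintype ι] [Nonempty ι] [MeasurableSpace Ω]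
    {μ : Measure Ω} {α : ι → ℝ} {G : ι → Ω → ℝ} (hα : ∀ i, 0 < α i) (hr : 0 < r)
    (hGindep : iIndepFun G μ) (hGlaw : ∀ i, HasLaw (G i) (gammaMeasure (α i) r) μ) :
    HasLaw (∑ i, G i) (gammaMeasure (∑ i, α i) r) μ := by
  have hα₀ : 0 < ∑ i, α i := Finset.sum_pos (fun i _ ↦ hα i) Finset.univ_nonempty
  have hG_meas : ∀ i, AEMeasurable (G i) μ := fun i ↦ (hGlaw i).aemeasurable
  have hsum_meas : AEMeasurable (∑ i, G i) μ := Finset.aemeasurable_sum _ fun i _ ↦ hG_meas i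
  have := isProbabilityMeasure_gammaMeasure hα₀ hr
  have := hGindep.isProbabilityMeasure
  refine ⟨hsum_meas, (measure_ext_of_mgf_id_eq ?_ (funext fun t ↦ ?_)).symm⟩
  · rwa [integrableExpSet_id_gammaMeasure hα₀ hr, interior_Iio]
  have hmgf_sum : mgf id (μ.map (∑ i, G i)) t = ∏ i, mgf id (gammaMeasure (α i) r) t := by
    simp only [mgf_id_map hsum_meas, hGindep.mgf_sum₀ hG_meas, ← (hGlaw _).map_eq,
      mgf_id_map (hG_meas _)]
  rw [hmgf_sum]
  rcases lt_or_ge t r with ht | ht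
  · simp only [mgf_id_gammaMeasure hα₀ hr ht, mgf_id_gammaMeasure (hα _) hr ht,
      Real.rpow_sum_of_pos (div_pos hr (sub_pos.2 ht))]
  · -- None of these integrals converges, so each `mgf` takes its junk value `0`.
    simp [mgf_id_gammaMeasure_of_le hα₀ hr ht, mgf_id_gammaMeasure_of_le (hα _) hr ht]

lemma exp_mul_log_ae_eq_rpow (a r u : ℝ) :
    (fun x ↦ Real.exp (u * Real.log x)) =ᵐ[gammaMeasure a r] fun x ↦ x ^ u := by
  filter_upwards [ae_pos_gammaMeasure a r] with x hx
  rw [Real.rpow_def_of_pos hx, mul_comm]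

lemma mgf_log_gammaMeasure (ha : 0 < a) (hr : 0 < r) (hau : 0 < a + u) :
    mgf Real.log (gammaMeasure a r) u = r ^ (-u) * Real.Gamma (a + u) / Real.Gamma a := by
  have h := integral_rpow_mul_exp_gammaMeasure ha hr hau hr
  simp only [zero_mul, Real.exp_zero, mul_one, sub_zero] at h
  rw [mgf, integral_congr_ae (exp_mul_log_ae_eq_rpow a r u), h, Real.rpow_add hr,
    Real.rpow_neg hr.le]
  field_simp

lemma zero_mem_interior_integrableExpSet_log_gammaMeasure (ha : 0 < a) (hr : 0 < r) :
    0 ∈ interior (integrableExpSet Real.log (gammaMeasure a r)) := by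
  have hsub : Set.Ioi (-a) ⊆ integrableExpSet Real.log (gammaMeasure a r) := fun u hu ↦ by
    have h := integrable_rpow_mul_exp_gammaMeasure ha hr (neg_lt_iff_pos_add'.1 hu) hr
    simp only [zero_mul, Real.exp_zero, mul_one] at h
    exact h.congr (exp_mul_log_ae_eq_rpow a r u).symm
  exact interior_maximal hsub isOpen_Ioi (neg_lt_zero.2 ha)

lemma hasDerivAt_rpow_neg_mul_Gamma_add_div_Gamma (ha : 0 < a) (hr : 0 < r) :
    HasDerivAt (fun u ↦ r ^ (-u) * Real.Gamma (a + u) / Real.Gamma a)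
      (digamma a - Real.log r) 0 := by
  have hΓ : Real.Gamma a ≠ 0 := (Real.Gamma_pos_of_pos ha).ne'
  have hΓ_diff : DifferentiableAt ℝ Real.Gamma (a + 0) := Real.differentiableAt_Gamma fun m ↦ by
    have : (0 : ℝ) ≤ m := m.cast_nonneg
    linarith
  have hr_deriv : HasDerivAt (fun u : ℝ ↦ r ^ (-u)) (-Real.log r) 0 := by
    simpa using (hasDerivAt_neg (0 : ℝ)).const_rpow hr
  convert! (hr_deriv.mul (hΓ_diff.hasDerivAt.comp_const_add a 0)).div_const (Real.Gamma a) using 1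
  simp only [digamma, neg_zero, add_zero, Real.rpow_zero]
  field_simp
  ring

lemma integral_log_gammaMeasure (ha : 0 < a) (hr : 0 < r) :
    ∫ x, Real.log x ∂gammaMeasure a r = digamma a - Real.log r := by
  have hmgf : mgf Real.log (gammaMeasure a r) =ᶠ[nhds 0]
      fun u ↦ r ^ (-u) * Real.Gamma (a + u) / Real.Gamma a := by
    filter_upwards [Ioi_mem_nhds (neg_lt_zero.2 ha)] with u hu
    exact mgf_log_gammaMeasure ha hr (neg_lt_iff_pos_add'.1 hu)
  rw [← deriv_mgf_zero (zero_mem_interior_integrableExpSet_log_gammaMeasure ha hr), hmgf.deriv_eq,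
    (hasDerivAt_rpow_neg_mul_Gamma_add_div_Gamma ha hr).deriv]

variable {Ω : Type*} [MeasurableSpace Ω] {μ : Measure Ω} {X Y : Ω → ℝ}

lemma ae_pos_of_hasLaw_gammaMeasure (hX : HasLaw X (gammaMeasure a r) μ) :
    ∀ᵐ ω ∂μ, 0 < X ω :=
  (hX.ae_iff (measurableSet_setOfPred.1 measurableSet_Ioi)).2 (ae_pos_gammaMeasure a r)

lemma integrable_log_of_hasLaw_gammaMeasure (ha : 0 < a) (hr : 0 < r)
    (hX : HasLaw X (gammaMeasure a r) μ) : Integrable (fun ω ↦ Real.log (X ω)) μ := by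
  have hlog := integrable_of_mem_interior_integrableExpSet
    (zero_mem_interior_integrableExpSet_log_gammaMeasure ha hr)
  rw [← hX.map_eq] at hlog
  exact hlog.comp_aemeasurable hX.aemeasurable

lemma integral_log_of_hasLaw_gammaMeasure (ha : 0 < a) (hr : 0 < r)
    (hX : HasLaw X (gammaMeasure a r) μ) :
    ∫ ω, Real.log (X ω) ∂μ = digamma a - Real.log r :=
  (hX.integral_comp Real.measurable_log.aestronglyMeasurable).trans
    (integral_log_gammaMeasure ha hr)

lemma integral_log_div_of_hasLaw_gammaMeasure (ha : 0 < a) (hb : 0 < b) (hr : 0 < r) (hs : 0 < s)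
    (hX : HasLaw X (gammaMeasure a r) μ) (hY : HasLaw Y (gammaMeasure b s) μ) :
    ∫ ω, Real.log (X ω / Y ω) ∂μ =
      (digamma a - Real.log r) - (digamma b - Real.log s) := by
  have hlog_div : (fun ω ↦ Real.log (X ω / Y ω)) =ᵐ[μ]
      fun ω ↦ Real.log (X ω) - Real.log (Y ω) := by
    filter_upwards [ae_pos_of_hasLaw_gammaMeasure hX, ae_pos_of_hasLaw_gammaMeasure hY]
      with ω hXω hYω
    exact Real.log_div hXω.ne' hYω.ne'
  rw [integral_congr_ae hlog_div,
    integral_sub (integrable_log_of_hasLaw_gammaMeasure ha hr hX)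
      (integrable_log_of_hasLaw_gammaMeasure hb hs hY),
    integral_log_of_hasLaw_gammaMeasure ha hr hX, integral_log_of_hasLaw_gammaMeasure hb hs hY]

end GammaMeasure

theorem dirichlet_log_moment_general {ι Ω : Type*} [Fintype ι] [MeasurableSpace Ω]
    {μ : Measure Ω} {α : ι → ℝ} {r : ℝ} {G : ι → Ω → ℝ} (hα : ∀ i, 0 < α i) (hr : 0 < r)
    (hGindep : iIndepFun G μ) (hGlaw : ∀ i, HasLaw (G i) (gammaMeasure (α i) r) μ) (k : ι) :
    ∫ ω, Real.log (G k ω / ∑ j, G j ω) ∂μ = digamma (α k) - digamma (∑ j, α j) := by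
  have : Nonempty ι := ⟨k⟩
  have hα₀ : 0 < ∑ j, α j := Finset.sum_pos (fun j _ ↦ hα j) Finset.univ_nonempty
  have hlog_div := integral_log_div_of_hasLaw_gammaMeasure (hα k) hα₀ hr hr (hGlaw k)
    (hasLaw_sum_gammaMeasure hα hr hGindep hGlaw)
  simpa only [Finset.sum_apply, sub_sub_sub_cancel_right] using hlog_div

/-- **Dirichlet logarithmic moment.**
Let `π` be a Dirichlet(α)-distributed random vector, realized as
`π_i = G_i / (G_1 + ⋯ + G_K)` where the `G_i` are independent Gamma(α_i, 1)
random variables.  Then `𝔼[log π_k] = ψ(α_k) − ψ(α₀)` where `α₀ = Σ_j α_j` and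
`ψ` is the digamma function. -/
theorem dirichlet_log_moment {K : ℕ} (hK : 0 < K)
    {Ω : Type*} [MeasurableSpace Ω] (μ : Measure Ω) [IsProbabilityMeasure μ]
    (α : Fin K → ℝ) (hα : ∀ i, 0 < α i)
    (G : Fin K → Ω → ℝ) (hGmeas : ∀ i, Measurable (G i))
    (hGindep : iIndepFun G μ)
    (hGlaw : ∀ i, μ.map (G i) = gammaMeasure (α i) 1)
    (π : Ω → EuclideanSpace ℝ (Fin K))
    (hπ : ∀ ω i, π ω i = G i ω / ∑ j, G j ω)
    (k : Fin K) :
    ∫ ω, Real.log (π ω k) ∂μ = digamma (α k) - digamma (∑ j, α j) := by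
  simp only [hπ]
  exact dirichlet_log_moment_general hα one_pos hGindep
    (fun i ↦ ⟨(hGmeas i).aemeasurable, hGlaw i⟩) k
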